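/- There exists R₀ > 9 such that for every real R ≥ R₀, the curve z^R satisfies both: (i) ∫_ℝ z^R_1(β) (z^R_1)'(β) z^R_2(β) / [(z^R_1(β))² + (z^R_2(β))²]² dβ < 0, and (ii) ∫_ℝ (z^R_1(β) − R) (z^R_1)'(β) z^R_2(β) / [(R − z^R_1(β))² + (z^R_2(β))²]² dβ > 0. Here (z^R_1)' denotes the derivative of z^R_1, which exists except at finitely many points, so each integrand is defined almost everywhere; moreover each integrand vanishes outside [−R−2, R+2], so both integrals converge. -/

import Mathlib

/-- First component of the tail curve `z^t` (its values outside `[-2,2]` are irrelevant). -/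
noncomputable def zt1 (a : ℝ) : ℝ :=
  if a ≤ -1 then a else if a ≤ 1 then a^3 else a

/-- Second component of the tail curve `z^t` (its values outside `[-2,2]` are irrelevant). -/
noncomputable def zt2 (a : ℝ) : ℝ :=
  if a ≤ -1 then -a - 2 else if a ≤ 1 then a else -a + 2

/-- First component of the center curve `z^c` (its values outside `[-7,7]` are irrelevant). -/
noncomputable def zc1 (a : ℝ) : ℝ :=
  if a ≤ -1 then a else if a ≤ 1 then a^3 else a

/-- Second component of the center curve `z^c` (its values outside `[-7,7]` are irrelevant). -/
noncomputable def zc2 (a : ℝ) : ℝ :=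
  if a ≤ -5 then 3/2*a + 21/2
  else if a ≤ -2 then 3
  else if a ≤ -1 then -5*a - 7
  else if a ≤ 1 then 3*a - a^3
  else if a ≤ 2 then -5*a + 7
  else if a ≤ 5 then -3
  else 3/2*a - 21/2

/-- First component of the glued curve `z^R`: left tail, center, right tail, flat elsewhere. -/
noncomputable def zR1 (R : ℝ) (a : ℝ) : ℝ :=
  if -R-2 ≤ a ∧ a ≤ -R+2 then zt1 (a + R) - R
  else if -7 ≤ a ∧ a ≤ 7 then zc1 a
  else if R-2 ≤ a ∧ a ≤ R+2 then zt1 (a - R) + R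
  else a

/-- Second component of the glued curve `z^R`: left tail, center, right tail, flat elsewhere. -/
noncomputable def zR2 (R : ℝ) (a : ℝ) : ℝ :=
  if -R-2 ≤ a ∧ a ≤ -R+2 then zt2 (a + R)
  else if -7 ≤ a ∧ a ≤ 7 then zc2 a
  else if R-2 ≤ a ∧ a ≤ R+2 then zt2 (a - R)
  else 0

/-!
Let `I(s)` be the integral of the kernel based at `(s, 0)`. Outside the three windows the curve
`z^R` lies on the horizontal axis and contributes nothing, so translating the tails back to the
origin gives
`I(s) = T(s + R) + C(s) + T(s - R)`,
where `T` and `C` are the corresponding integrals along the tail and the center curve. The kernel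
decays like `|s|⁻³` on a bounded curve, hence `I(0) → C(0)` and `I(R) → T(0)` as `R → ∞`, and it
remains to see that `C(0) < 0 < T(0)`. Both curves are odd, so half of each curve suffices; there
the kernel has an elementary antiderivative on every line segment, and only the cubic arcs through
the origin need an estimate.
-/

open MeasureTheory Set Filter Topology

theorem abs_deriv_le_of_eqOn {f g : ℝ → ℝ} {S : Set ℝ} {t g' L : ℝ} (hfg : EqOn f g S)
    (ht : t ∈ S) (hS : UniqueDiffWithinAt ℝ S t) (hg : HasDerivAt g g' t) (hL : |g'| ≤ L) :
    |deriv f t| ≤ L := by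
  by_cases hf : DifferentiableAt ℝ f t
  · have hg' := hg.hasDerivWithinAt.congr hfg (hfg ht)
    rwa [hS.eq_deriv S hf.hasDerivAt.hasDerivWithinAt hg']
  · simpa [deriv_zero_of_not_differentiableAt hf] using (abs_nonneg g').trans hL

theorem abs_le_of_mem_uIoc_neg_self {A t : ℝ} (hA : 0 ≤ A) (ht : t ∈ uIoc (-A) A) :
    |t| ≤ A := by
  rw [uIoc_of_le (by linarith)] at ht
  exact abs_le.2 ⟨ht.1.le, ht.2⟩

/-- The kernel of the velocity-derivative integral of the curve `(x, y)` based at the point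
`(s, 0)`. -/
noncomputable def turningKernel (s : ℝ) (x y : ℝ → ℝ) (t : ℝ) : ℝ :=
  (x t - s) * deriv x t * y t / ((s - x t) ^ 2 + y t ^ 2) ^ 2

/-- `f` is integrable on the interval from `a` to `b`, with integral `v`. Unlike a bare equation
between integrals, it excludes the junk value of a non-integrable function, and it adds up over
adjacent intervals. -/
def HasIntervalIntegral (f : ℝ → ℝ) (a b v : ℝ) : Prop :=
  IntervalIntegrable f volume a b ∧ ∫ t in a..b, f t = v

namespace HasIntervalIntegral

variable {f g : ℝ → ℝ} {a b c v w : ℝ}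

theorem of_intervalIntegrable (h : IntervalIntegrable f volume a b) :
    HasIntervalIntegral f a b (∫ t in a..b, f t) :=
  ⟨h, rfl⟩

theorem trans (hab : HasIntervalIntegral f a b v) (hbc : HasIntervalIntegral f b c w) :
    HasIntervalIntegral f a c (v + w) :=
  ⟨hab.1.trans hbc.1, by
    rw [← intervalIntegral.integral_add_adjacent_intervals hab.1 hbc.1, hab.2, hbc.2]⟩

theorem congr_Ioo (hf : HasIntervalIntegral f a b v) (hab : a ≤ b) (hfg : EqOn f g (Ioo a b)) :
    HasIntervalIntegral g a b v :=
  ⟨hf.1.congr_uIoo (by rwa [uIoo_of_le hab]),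
    (intervalIntegral.integral_congr_Ioo_of_le hab hfg).symm.trans hf.2⟩

theorem of_eqOn_zero (hab : a ≤ b) (hf : EqOn f 0 (Ioo a b)) : HasIntervalIntegral f a b 0 :=
  congr_Ioo ⟨intervalIntegrable_const, intervalIntegral.integral_zero⟩ hab hf.symm

theorem of_hasDerivAt (hfg : ∀ t, HasDerivAt f (g t) t) (hg : Continuous g) :
    HasIntervalIntegral g a b (f b - f a) :=
  have hi := hg.intervalIntegrable a b
  ⟨hi, intervalIntegral.integral_eq_sub_of_hasDerivAt (fun t _ ↦ hfg t) hi⟩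

theorem comp_sub_right (hf : HasIntervalIntegral f a b v) (c : ℝ) :
    HasIntervalIntegral (fun t ↦ f (t - c)) (a + c) (b + c) v :=
  ⟨hf.1.comp_sub_right c, by simpa using hf.2⟩

theorem of_even (hf : HasIntervalIntegral f 0 a v) (heven : f.Even) :
    HasIntervalIntegral f (-a) a (2 * v) := by
  have hneg : HasIntervalIntegral f (-a) 0 v := by
    constructor
    · simpa [heven.eq, div_neg] using (hf.1.comp_mul_left (c := -1)).symm
    · simpa [heven.eq, hf.2] using (intervalIntegral.integral_comp_neg (a := 0) (b := a) f).symm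
  simpa only [two_mul] using hneg.trans hf

end HasIntervalIntegral

section turningKernel

variable {s : ℝ} {x y x' y' : ℝ → ℝ} {a b v : ℝ}

theorem turningKernel_eqOn {U : Set ℝ} (hU : IsOpen U) (hx : EqOn x x' U) (hy : EqOn y y' U) :
    EqOn (turningKernel s x y) (turningKernel s x' y') U := fun t ht ↦ by
  simp only [turningKernel, hx ht, hy ht, hx.deriv hU ht]

theorem turningKernel_eq_zero {t : ℝ} (hy : y t = 0) : turningKernel s x y t = 0 := by
  simp [turningKernel, hy]

theorem turningKernel_comp_sub_const (s c : ℝ) (x y : ℝ → ℝ) :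
    turningKernel s (fun t ↦ x (t - c) + c) (fun t ↦ y (t - c)) =
      fun t ↦ turningKernel (s - c) x y (t - c) := by
  funext t
  simp only [turningKernel, deriv_add_const, deriv_comp_sub_const]
  ring_nf

theorem even_turningKernel_zero (hx : x.Odd) (hy : y.Odd) : (turningKernel 0 x y).Even := by
  intro t
  have hderiv : deriv x (-t) = deriv x t := by
    have h : deriv (fun u ↦ x (-u)) t = deriv (fun u ↦ -x u) t := by simp only [hx _]
    rwa [deriv_comp_neg, deriv.fun_neg, neg_inj] at h
  simp only [turningKernel, hx t, hy t, hderiv]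
  ring_nf

theorem HasIntervalIntegral.translate_curve {c : ℝ}
    (h : HasIntervalIntegral (turningKernel (s - c) x y) a b v) :
    HasIntervalIntegral (turningKernel s (fun t ↦ x (t - c) + c) (fun t ↦ y (t - c)))
      (a + c) (b + c) v := by
  rw [turningKernel_comp_sub_const]
  exact h.comp_sub_right c

theorem HasIntervalIntegral.congr_curve (h : HasIntervalIntegral (turningKernel s x y) a b v)
    (hab : a ≤ b) (hx : EqOn x x' (Ioo a b)) (hy : EqOn y y' (Ioo a b)) :
    HasIntervalIntegral (turningKernel s x' y') a b v :=
  h.congr_Ioo hab (turningKernel_eqOn isOpen_Ioo hx hy)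

theorem measurable_turningKernel (s : ℝ) (hx : Measurable x) (hy : Measurable y) :
    Measurable (turningKernel s x y) := by
  have := measurable_deriv x
  unfold turningKernel
  fun_prop

/-! ### Decay in the base point -/

variable {A B L : ℝ}

theorem abs_turningKernel_le {t : ℝ} (hs : A < |s|) (hx : |x t| ≤ A) (hx' : |deriv x t| ≤ L)
    (hy : |y t| ≤ B) : |turningKernel s x y t| ≤ L * B / (|s| - A) ^ 3 := by
  have hgap : 0 < |s| - A := sub_pos.2 hs
  have hdist : |s| - A ≤ |x t - s| := by
    linarith [abs_sub_abs_le_abs_sub s (x t), abs_sub_comm s (x t)]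
  have hpos : 0 < |x t - s| := hgap.trans_le hdist
  have hden : |x t - s| ^ 4 ≤ ((s - x t) ^ 2 + y t ^ 2) ^ 2 := by
    rw [show |x t - s| ^ 4 = ((s - x t) ^ 2) ^ 2 by rw [← sq_abs (s - x t), abs_sub_comm]; ring]
    gcongr
    exact le_add_of_nonneg_right (sq_nonneg _)
  have hL : 0 ≤ L := (abs_nonneg _).trans hx'
  have hB : 0 ≤ B := (abs_nonneg _).trans hy
  calc |turningKernel s x y t|
      = |x t - s| * (|deriv x t| * |y t|) / ((s - x t) ^ 2 + y t ^ 2) ^ 2 := by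
        rw [turningKernel, abs_div, abs_mul, abs_mul, mul_assoc,
          abs_of_nonneg (sq_nonneg ((s - x t) ^ 2 + y t ^ 2))]
    _ ≤ |x t - s| * (L * B) / |x t - s| ^ 4 := by gcongr
    _ = L * B / |x t - s| ^ 3 := by field_simp
    _ ≤ L * B / (|s| - A) ^ 3 := by gcongr

theorem intervalIntegrable_turningKernel (hs : A < |s|) (hxm : Measurable x) (hym : Measurable y)
    (hx : ∀ t ∈ uIoc a b, |x t| ≤ A) (hx' : ∀ t ∈ uIoc a b, |deriv x t| ≤ L)
    (hy : ∀ t ∈ uIoc a b, |y t| ≤ B) : IntervalIntegrable (turningKernel s x y) volume a b := by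
  rw [intervalIntegrable_iff]
  refine .of_bound (by simp) (measurable_turningKernel s hxm hym).aestronglyMeasurable
    (L * B / (|s| - A) ^ 3) ?_
  exact (ae_restrict_iff' measurableSet_uIoc).2 <| .of_forall fun t ht ↦
    abs_turningKernel_le hs (hx t ht) (hx' t ht) (hy t ht)

theorem tendsto_integral_turningKernel (hx : ∀ t ∈ uIoc a b, |x t| ≤ A)
    (hx' : ∀ t ∈ uIoc a b, |deriv x t| ≤ L) (hy : ∀ t ∈ uIoc a b, |y t| ≤ B) :
    Tendsto (fun s ↦ ∫ t in a..b, turningKernel s x y t) (Bornology.cobounded ℝ) (𝓝 0) := by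
  have habs : Tendsto (fun s : ℝ ↦ |s|) (Bornology.cobounded ℝ) atTop :=
    tendsto_norm_cobounded_atTop
  have hbound : Tendsto (fun s ↦ L * B / (|s| - A) ^ 3 * |b - a|) (Bornology.cobounded ℝ)
      (𝓝 0) := by
    have hcube := (tendsto_pow_atTop three_ne_zero).comp (tendsto_atTop_add_const_right _ (-A) habs)
    simpa [sub_eq_add_neg] using (hcube.const_div_atTop (L * B)).mul_const |b - a|
  refine squeeze_zero_norm' ?_ hbound
  filter_upwards [habs.eventually_gt_atTop A] with s hs
  exact intervalIntegral.norm_integral_le_of_norm_le_const fun t ht ↦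
    abs_turningKernel_le hs (hx t ht) (hx' t ht) (hy t ht)

/-! ### Line segments and cubic arcs, seen from the origin -/

theorem sq_add_affine_sq_pos {m c : ℝ} (hc : c ≠ 0) (t : ℝ) : 0 < t ^ 2 + (m * t + c) ^ 2 := by
  rcases eq_or_ne t 0 with rfl | ht
  · simpa using pow_pos (abs_pos.2 hc) 2
  · positivity

theorem hasDerivAt_sq_div_affine {m c : ℝ} (hc : c ≠ 0) (t : ℝ) :
    HasDerivAt (fun u ↦ u ^ 2 / (2 * c * (u ^ 2 + (m * u + c) ^ 2)))
      (t * (m * t + c) / (t ^ 2 + (m * t + c) ^ 2) ^ 2) t := by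
  have hpos := (sq_add_affine_sq_pos (m := m) hc t).ne'
  have haffine : HasDerivAt (fun u ↦ m * u + c) m t := by
    simpa using ((hasDerivAt_id' t).const_mul m).add_const c
  have hsq : HasDerivAt (fun u : ℝ ↦ u ^ 2) (2 * t) t := by simpa using hasDerivAt_pow 2 t
  refine (hsq.fun_div ((hsq.fun_add (haffine.fun_pow 2)).const_mul (2 * c))
    (by positivity)).congr_deriv ?_
  field_simp
  ring

theorem hasIntervalIntegral_turningKernel_segment {m c : ℝ} (hc : c ≠ 0) (hab : a ≤ b)
    (hx : EqOn x id (Ioo a b)) (hy : EqOn y (fun t ↦ m * t + c) (Ioo a b)) :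
    HasIntervalIntegral (turningKernel 0 x y) a b
      (b ^ 2 / (2 * c * (b ^ 2 + (m * b + c) ^ 2)) -
        a ^ 2 / (2 * c * (a ^ 2 + (m * a + c) ^ 2))) := by
  have hkernel : turningKernel 0 id (fun t ↦ m * t + c) =
      fun t ↦ t * (m * t + c) / (t ^ 2 + (m * t + c) ^ 2) ^ 2 := by
    funext t
    simp [turningKernel]
  refine HasIntervalIntegral.congr_curve ?_ hab hx.symm hy.symm
  rw [hkernel]
  refine .of_hasDerivAt (hasDerivAt_sq_div_affine hc) ?_
  exact Continuous.div (by fun_prop) (by fun_prop)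
    fun t ↦ pow_ne_zero 2 (sq_add_affine_sq_pos hc t).ne'

/-- The kernel based at the origin along the arc `(t ^ 3, t * q t)`, after cancelling the common
factor `t ^ 4`. The vertical tangent makes the singularity at the origin removable: the cancelled
form is continuous as soon as `q 0 ≠ 0`. -/
noncomputable def cubicArcKernel (q : ℝ → ℝ) (t : ℝ) : ℝ :=
  3 * t ^ 2 * q t / (t ^ 4 + q t ^ 2) ^ 2

theorem turningKernel_cube (q : ℝ → ℝ) :
    turningKernel 0 (fun t ↦ t ^ 3) (fun t ↦ t * q t) = cubicArcKernel q := by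
  funext t
  rcases eq_or_ne t 0 with rfl | ht
  · simp [turningKernel, cubicArcKernel]
  · have hden : (0 - t ^ 3) ^ 2 + (t * q t) ^ 2 = t ^ 2 * (t ^ 4 + q t ^ 2) := by ring
    have hnum : (t ^ 3 - 0) * (3 * t ^ 2) * (t * q t) = (t ^ 2) ^ 2 * (3 * t ^ 2 * q t) := by ring
    have hderiv : deriv (fun u : ℝ ↦ u ^ 3) t = 3 * t ^ 2 := by simp
    rw [turningKernel, hderiv, hden, hnum, mul_pow, mul_div_mul_left _ _ (by positivity),
      cubicArcKernel]

theorem continuous_cubicArcKernel {q : ℝ → ℝ} (hq : Continuous q) (hq0 : q 0 ≠ 0) :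
    Continuous (cubicArcKernel q) := by
  have hpos (t : ℝ) : 0 < t ^ 4 + q t ^ 2 := by
    rcases eq_or_ne t 0 with rfl | ht
    · simpa using pow_pos (abs_pos.2 hq0) 2
    · positivity
  exact Continuous.div (by fun_prop) (by fun_prop) fun t ↦ pow_ne_zero 2 (hpos t).ne'

theorem hasIntervalIntegral_turningKernel_cube {q : ℝ → ℝ} (hq : Continuous q) (hq0 : q 0 ≠ 0)
    (hab : a ≤ b) (hx : EqOn x (fun t ↦ t ^ 3) (Ioo a b))
    (hy : EqOn y (fun t ↦ t * q t) (Ioo a b)) :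
    HasIntervalIntegral (turningKernel 0 x y) a b (∫ t in a..b, cubicArcKernel q t) := by
  refine HasIntervalIntegral.congr_curve ?_ hab hx.symm hy.symm
  rw [turningKernel_cube]
  exact .of_intervalIntegrable ((continuous_cubicArcKernel hq hq0).intervalIntegrable a b)

end turningKernel

/-! ### The tail and center curves -/

theorem zc1_eq_zt1 : zc1 = zt1 := rfl

theorem odd_zt1 : zt1.Odd := fun t ↦ by
  rcases eq_or_ne t (-1) with rfl | ht
  · norm_num [zt1]
  · unfold zt1
    grind

theorem odd_zt2 : zt2.Odd := fun t ↦ by unfold zt2; grind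

theorem odd_zc2 : zc2.Odd := fun t ↦ by
  rcases eq_or_ne t (-1) with rfl | ht
  · norm_num [zc2]
  · unfold zc2
    grind

theorem zt1_eqOn_Iic : EqOn zt1 id (Iic (-1)) := fun _ ht ↦ if_pos ht

theorem zt1_eqOn_Icc : EqOn zt1 (fun t ↦ t ^ 3) (Icc (-1) 1) := fun t ht ↦ by
  rcases ht.1.eq_or_lt with rfl | hlt
  · norm_num [zt1]
  · simp [zt1, hlt, ht.2]

theorem zt1_eqOn_Ici : EqOn zt1 id (Ici 1) := fun t ht ↦ by
  rcases (mem_Ici.1 ht).eq_or_lt with rfl | hlt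
  · norm_num [zt1]
  · unfold zt1
    grind

theorem abs_deriv_zt1_le (t : ℝ) : |deriv zt1 t| ≤ 3 := by
  rcases le_total t (-1) with h | h
  · exact abs_deriv_le_of_eqOn zt1_eqOn_Iic h (uniqueDiffOn_Iic _ _ h) (hasDerivAt_id t)
      (by norm_num)
  rcases le_total t 1 with h' | h'
  · have ht : t ∈ Icc (-1 : ℝ) 1 := ⟨h, h'⟩
    refine abs_deriv_le_of_eqOn zt1_eqOn_Icc ht (uniqueDiffOn_Icc (by norm_num) t ht)
      (hasDerivAt_pow 3 t) ?_
    have hsq : t ^ 2 ≤ 1 := (sq_le_one_iff_abs_le_one t).2 (abs_le.2 ht)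
    simpa using hsq
  · exact abs_deriv_le_of_eqOn zt1_eqOn_Ici h' (uniqueDiffOn_Ici _ _ h') (hasDerivAt_id t)
      (by norm_num)

theorem measurable_zt1 : Measurable zt1 := by
  unfold zt1
  repeat' refine Measurable.ite measurableSet_Iic ?_ ?_
  all_goals fun_prop

theorem measurable_zt2 : Measurable zt2 := by
  unfold zt2
  repeat' refine Measurable.ite measurableSet_Iic ?_ ?_
  all_goals fun_prop

theorem measurable_zc2 : Measurable zc2 := by
  unfold zc2
  repeat' refine Measurable.ite measurableSet_Iic ?_ ?_
  all_goals fun_prop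

theorem abs_zt1_le {A t : ℝ} (hA : 1 ≤ A) (ht : |t| ≤ A) : |zt1 t| ≤ A := by
  unfold zt1
  split_ifs
  · assumption
  · rw [abs_pow]
    exact (pow_le_one₀ (abs_nonneg t) (abs_le.2 ⟨by linarith, by linarith⟩)).trans hA
  · assumption

theorem abs_zt2_le {t : ℝ} (ht : |t| ≤ 2) : |zt2 t| ≤ 1 := by
  rw [abs_le] at *
  unfold zt2
  grind

theorem abs_zc2_le {t : ℝ} (ht : |t| ≤ 7) : |zc2 t| ≤ 3 := by
  rw [abs_le] at *
  unfold zc2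
  split_ifs <;> constructor <;> nlinarith [sq_nonneg (t - 1), sq_nonneg (t + 1)]

theorem intervalIntegrable_turningKernel_tail {s : ℝ} (hs : 2 < |s|) :
    IntervalIntegrable (turningKernel s zt1 zt2) volume (-2) 2 :=
  intervalIntegrable_turningKernel hs measurable_zt1 measurable_zt2
    (fun _ ht ↦ abs_zt1_le one_le_two (abs_le_of_mem_uIoc_neg_self (by norm_num) ht))
    (fun t _ ↦ abs_deriv_zt1_le t)
    (fun _ ht ↦ abs_zt2_le (abs_le_of_mem_uIoc_neg_self (by norm_num) ht))

theorem intervalIntegrable_turningKernel_center {s : ℝ} (hs : 7 < |s|) :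
    IntervalIntegrable (turningKernel s zc1 zc2) volume (-7) 7 :=
  zc1_eq_zt1 ▸ intervalIntegrable_turningKernel hs measurable_zt1 measurable_zc2
    (fun _ ht ↦ abs_zt1_le (by norm_num) (abs_le_of_mem_uIoc_neg_self (by norm_num) ht))
    (fun t _ ↦ abs_deriv_zt1_le t)
    (fun _ ht ↦ abs_zc2_le (abs_le_of_mem_uIoc_neg_self (by norm_num) ht))

theorem tendsto_integral_turningKernel_tail :
    Tendsto (fun s ↦ ∫ t in (-2)..2, turningKernel s zt1 zt2 t) (Bornology.cobounded ℝ) (𝓝 0) :=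
  tendsto_integral_turningKernel
    (fun _ ht ↦ abs_zt1_le one_le_two (abs_le_of_mem_uIoc_neg_self (by norm_num) ht))
    (fun t _ ↦ abs_deriv_zt1_le t)
    (fun _ ht ↦ abs_zt2_le (abs_le_of_mem_uIoc_neg_self (by norm_num) ht))

theorem tendsto_integral_turningKernel_center :
    Tendsto (fun s ↦ ∫ t in (-7)..7, turningKernel s zc1 zc2 t) (Bornology.cobounded ℝ) (𝓝 0) :=
  zc1_eq_zt1 ▸ tendsto_integral_turningKernel
    (fun _ ht ↦ abs_zt1_le (by norm_num) (abs_le_of_mem_uIoc_neg_self (by norm_num) ht))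
    (fun t _ ↦ abs_deriv_zt1_le t)
    (fun _ ht ↦ abs_zc2_le (abs_le_of_mem_uIoc_neg_self (by norm_num) ht))

/-! ### Signs of the two limits -/

theorem hasIntervalIntegral_turningKernel_tail :
    HasIntervalIntegral (turningKernel 0 zt1 zt2) (-2) 2
      (2 * ((∫ t in 0..1, cubicArcKernel 1 t) + 1 / 8)) := by
  have harc := hasIntervalIntegral_turningKernel_cube (a := 0) (b := 1) (x := zt1) (y := zt2)
    continuous_one one_ne_zero zero_le_one
    (fun t ht ↦ zt1_eqOn_Icc ⟨by grind, ht.2.le⟩)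
    (fun t ht ↦ by simp only [Pi.one_apply, mul_one]; unfold zt2; grind)
  have hsegment := hasIntervalIntegral_turningKernel_segment (a := 1) (b := 2) (x := zt1)
    (y := zt2) (m := -1) (c := 2) two_ne_zero one_le_two
    (fun t ht ↦ zt1_eqOn_Ici ht.1.le) (fun t ht ↦ by unfold zt2; grind)
  convert (harc.trans hsegment).of_even (even_turningKernel_zero odd_zt1 odd_zt2) using 3
  norm_num

theorem integral_turningKernel_tail_pos : 0 < ∫ t in (-2)..2, turningKernel 0 zt1 zt2 t := by
  have harc : 0 ≤ ∫ t in 0..1, cubicArcKernel 1 t :=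
    intervalIntegral.integral_nonneg zero_le_one fun t _ ↦ by
      simp only [cubicArcKernel, Pi.one_apply]
      positivity
  rw [hasIntervalIntegral_turningKernel_tail.2]
  positivity

theorem hasIntervalIntegral_turningKernel_center :
    HasIntervalIntegral (turningKernel 0 zc1 zc2) (-7) 7
      (2 * ((∫ t in 0..1, cubicArcKernel (fun t ↦ 3 - t ^ 2) t) +
        (1 / 130 + (-63 / 884 + -3 / 238)))) := by
  have hx {a b : ℝ} (ha : 1 ≤ a) : EqOn zc1 id (Ioo a b) :=
    fun t ht ↦ zt1_eqOn_Ici (ha.trans ht.1.le)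
  have harc := hasIntervalIntegral_turningKernel_cube (a := 0) (b := 1) (x := zc1) (y := zc2)
    (q := fun t ↦ 3 - t ^ 2) (by fun_prop) (by norm_num) zero_le_one
    (fun t ht ↦ zt1_eqOn_Icc ⟨by grind, ht.2.le⟩) (fun t ht ↦ by unfold zc2; grind)
  have hdescent := hasIntervalIntegral_turningKernel_segment (a := 1) (b := 2) (x := zc1) (y := zc2)
    (m := -5) (c := 7) (by norm_num) (by norm_num) (hx le_rfl) (fun t ht ↦ by unfold zc2; grind)
  have hplateau := hasIntervalIntegral_turningKernel_segment (a := 2) (b := 5) (x := zc1) (y := zc2)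
    (m := 0) (c := -3) (by norm_num) (by norm_num) (hx one_le_two)
    (fun t ht ↦ by unfold zc2; grind)
  have hreturn := hasIntervalIntegral_turningKernel_segment (a := 5) (b := 7) (x := zc1) (y := zc2)
    (m := 3 / 2) (c := -21 / 2) (by norm_num) (by norm_num) (hx (by norm_num))
    (fun t ht ↦ by unfold zc2; grind)
  convert (harc.trans (hdescent.trans (hplateau.trans hreturn))).of_even
    (even_turningKernel_zero odd_zt1 odd_zc2) using 3
  norm_num

/-- In terms of `u = t ^ 2` the kernel is `u * k u` with `k 0 = 1 / 9` and `k 1 = 6 / 25`; the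
majorant replaces `k` by a line through `(0, 1 / 9)` of slope above the chord's. -/
theorem cubicArcKernel_center_le {t : ℝ} (ht : t ^ 2 ≤ 1) :
    cubicArcKernel (fun t ↦ 3 - t ^ 2) t ≤ t ^ 2 / 9 + t ^ 4 / 6 := by
  rw [cubicArcKernel, show t ^ 4 = (t ^ 2) ^ 2 by ring]
  have hu0 := sq_nonneg t
  generalize t ^ 2 = u at ht hu0 ⊢
  have hden : 0 < u ^ 2 + (3 - u) ^ 2 := by nlinarith
  have hquad : 0 ≤ 81 - 180 * u + 104 * u ^ 2 := by nlinarith [sq_nonneg (u - 45 / 52)]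
  have hgap : 0 ≤ u ^ 2 * (81 - 180 * u + 104 * u ^ 2 + 64 * u ^ 2 * (1 - u) + 12 * u ^ 4) := by
    have := sub_nonneg.2 ht
    positivity
  rw [div_le_iff₀ (by positivity)]
  linear_combination hgap / 18

theorem integral_cubicArcKernel_center_le :
    ∫ t in 0..1, cubicArcKernel (fun t ↦ 3 - t ^ 2) t ≤ 19 / 270 := by
  have hmajorant : Continuous fun t : ℝ ↦ t ^ 2 / 9 + t ^ 4 / 6 := by fun_prop
  calc ∫ t in 0..1, cubicArcKernel (fun t ↦ 3 - t ^ 2) t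
      ≤ ∫ t : ℝ in 0..1, (t ^ 2 / 9 + t ^ 4 / 6) :=
        intervalIntegral.integral_mono_on zero_le_one
          ((continuous_cubicArcKernel (by fun_prop) (by norm_num)).intervalIntegrable _ _)
          (hmajorant.intervalIntegrable _ _)
          fun t ht ↦ cubicArcKernel_center_le (pow_le_one₀ ht.1 ht.2)
    _ = 19 / 270 := by
        rw [intervalIntegral.integral_add (Continuous.intervalIntegrable (by fun_prop) _ _)
          (Continuous.intervalIntegrable (by fun_prop) _ _)]
        norm_num

theorem integral_turningKernel_center_neg : ∫ t in (-7)..7, turningKernel 0 zc1 zc2 t < 0 := by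
  rw [hasIntervalIntegral_turningKernel_center.2]
  linarith [integral_cubicArcKernel_center_le]

/-! ### The glued curve -/

theorem zR2_eq_zero_of_notMem {R t : ℝ} (hR : 9 < R) (ht : t ∉ Ioc (-2 + -R) (2 + R)) :
    zR2 R t = 0 := by
  simp only [mem_Ioc, not_and_or, not_lt, not_le] at ht
  unfold zR2 zt2
  grind

theorem integral_turningKernel_glued {R s : ℝ} (hR : 9 < R)
    (hleft : IntervalIntegrable (turningKernel (s + R) zt1 zt2) volume (-2) 2)
    (hcenter : IntervalIntegrable (turningKernel s zc1 zc2) volume (-7) 7)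
    (hright : IntervalIntegrable (turningKernel (s - R) zt1 zt2) volume (-2) 2) :
    ∫ t, turningKernel s (zR1 R) (zR2 R) t =
      (∫ t in (-2)..2, turningKernel (s + R) zt1 zt2 t) +
      (∫ t in (-7)..7, turningKernel s zc1 zc2 t) +
      ∫ t in (-2)..2, turningKernel (s - R) zt1 zt2 t := by
  rw [← sub_neg_eq_add] at hleft
  have htailLeft : HasIntervalIntegral (turningKernel s (zR1 R) (zR2 R)) (-2 + -R) (2 + -R) _ :=
    (HasIntervalIntegral.of_intervalIntegrable hleft).translate_curve.congr_curve
      (by linarith) (fun t ht ↦ by grind [zR1]) (fun t ht ↦ by grind [zR2])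
  have hgapLeft : HasIntervalIntegral (turningKernel s (zR1 R) (zR2 R)) (2 + -R) (-7) 0 :=
    .of_eqOn_zero (by linarith) fun t ht ↦ turningKernel_eq_zero (by grind [zR2])
  have hmiddle : HasIntervalIntegral (turningKernel s (zR1 R) (zR2 R)) (-7) 7 _ :=
    (HasIntervalIntegral.of_intervalIntegrable hcenter).congr_curve
      (by norm_num) (fun t ht ↦ by grind [zR1]) (fun t ht ↦ by grind [zR2])
  have hgapRight : HasIntervalIntegral (turningKernel s (zR1 R) (zR2 R)) 7 (-2 + R) 0 :=
    .of_eqOn_zero (by linarith) fun t ht ↦ turningKernel_eq_zero (by grind [zR2])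
  have htailRight : HasIntervalIntegral (turningKernel s (zR1 R) (zR2 R)) (-2 + R) (2 + R) _ :=
    (HasIntervalIntegral.of_intervalIntegrable hright).translate_curve.congr_curve
      (by linarith) (fun t ht ↦ by grind [zR1]) (fun t ht ↦ by grind [zR2])
  have hsupport : Function.support (turningKernel s (zR1 R) (zR2 R)) ⊆ Ioc (-2 + -R) (2 + R) :=
    Function.support_subset_iff'.2 fun t ht ↦ turningKernel_eq_zero (zR2_eq_zero_of_notMem hR ht)
  rw [← intervalIntegral.integral_eq_integral_of_support_subset hsupport,
    ((((htailLeft.trans hgapLeft).trans hmiddle).trans hgapRight).trans htailRight).2]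
  simp only [add_zero, sub_neg_eq_add]

theorem tendsto_integral_turningKernel_glued_at_zero :
    Tendsto (fun R ↦ ∫ t, turningKernel 0 (zR1 R) (zR2 R) t) atTop
      (𝓝 (∫ t in (-7)..7, turningKernel 0 zc1 zc2 t)) := by
  have hleft := tendsto_integral_turningKernel_tail.mono_left
    IsOrderBornology.atTop_le_cobounded
  have hright := tendsto_integral_turningKernel_tail.comp
    (tendsto_neg_cobounded.mono_left IsOrderBornology.atTop_le_cobounded)
  have hlim := (hleft.add_const (∫ t in (-7)..7, turningKernel 0 zc1 zc2 t)).add hright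
  rw [zero_add, add_zero] at hlim
  refine hlim.congr' ?_
  filter_upwards [eventually_gt_atTop 9] with R hR
  have hfar : 2 < |R| := lt_abs.2 (.inl (by linarith))
  simpa using (integral_turningKernel_glued (s := 0) hR
    (intervalIntegrable_turningKernel_tail (by simpa using hfar))
    hasIntervalIntegral_turningKernel_center.1
    (intervalIntegrable_turningKernel_tail (by simpa using hfar))).symm

theorem tendsto_integral_turningKernel_glued_at_self :
    Tendsto (fun R ↦ ∫ t, turningKernel R (zR1 R) (zR2 R) t) atTop
      (𝓝 (∫ t in (-2)..2, turningKernel 0 zt1 zt2 t)) := by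
  have hdouble : Tendsto (fun R : ℝ ↦ R + R) atTop (Bornology.cobounded ℝ) :=
    (tendsto_id.atTop_add_atTop tendsto_id).mono_right IsOrderBornology.atTop_le_cobounded
  have hleft := tendsto_integral_turningKernel_tail.comp hdouble
  have hcenter := tendsto_integral_turningKernel_center.mono_left
    IsOrderBornology.atTop_le_cobounded
  have hlim := (hleft.add hcenter).add_const (∫ t in (-2)..2, turningKernel 0 zt1 zt2 t)
  rw [zero_add, zero_add] at hlim
  refine hlim.congr' ?_
  filter_upwards [eventually_gt_atTop 9] with R hR
  simpa using (integral_turningKernel_glued (s := R) hR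
    (intervalIntegrable_turningKernel_tail (lt_abs.2 (.inl (by linarith))))
    (intervalIntegrable_turningKernel_center (lt_abs.2 (.inl (by linarith))))
    (by simpa using hasIntervalIntegral_turningKernel_tail.1)).symm

/-- There exists `R₀ > 9` such that for every `R ≥ R₀` the curve `z^R` turns over near
`α = 0` (negative velocity-derivative integral there) but not near `α = ±R` (positive
velocity-derivative integral there). -/
theorem exists_R_turning :
    ∃ R₀ : ℝ, 9 < R₀ ∧ ∀ R : ℝ, R₀ ≤ R →
      (∫ b : ℝ, zR1 R b * deriv (zR1 R) b * zR2 R b /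
          ((zR1 R b)^2 + (zR2 R b)^2)^2) < 0 ∧
      0 < ∫ b : ℝ, (zR1 R b - R) * deriv (zR1 R) b * zR2 R b /
          ((R - zR1 R b)^2 + (zR2 R b)^2)^2 := by
  have hcenter := tendsto_integral_turningKernel_glued_at_zero.eventually_lt_const
    integral_turningKernel_center_neg
  have htail := tendsto_integral_turningKernel_glued_at_self.eventually_const_lt
    integral_turningKernel_tail_pos
  obtain ⟨R₀, hsigns, hR₀⟩ :=
    ((eventually_forall_ge_atTop.2 (hcenter.and htail)).and (eventually_gt_atTop 9)).exists
  refine ⟨R₀, hR₀, fun R hR ↦ ?_⟩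
  simpa [turningKernel] using hsigns R hR
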